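/- Let n = n₁·n₂ with n₁, n₂ coprime positive integers, and let k be a divisor of n, written uniquely as k = k₁·k₂ with k₁ | n₁ and k₂ | n₂. Then Y[n,k] = Y[n₁,k₁]·Y[n₂,k₂]. -/

import Mathlib

/-- The Ramanujan sum `c_d(r)`: the sum of the `r`-th powers of all primitive
`d`-th roots of unity. -/
noncomputable def ramanujanSum (d r : ℕ) : ℂ :=
  ∑ m ∈ (Finset.range d).filter (fun m => Nat.gcd m d = 1),
    Complex.exp (2 * Real.pi * Complex.I * ((m : ℂ) * (r : ℂ) / (d : ℂ)))

/-- `Y[n,k] = ∑_{d ∣ n} c_k(n/d) · c_d(n/d)`. -/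
noncomputable def Y (n k : ℕ) : ℂ :=
  ∑ d ∈ n.divisors, ramanujanSum k (n / d) * ramanujanSum d (n / d)

/- For coprime `a` and `b`, multiplication is a bijection from pairs of primitive `a`-th and `b`-th
roots of unity onto primitive `a * b`-th roots of unity, so `c_{ab}(r) = c_a(r) c_b(r)`. Raising to
a power coprime to `d` permutes the primitive `d`-th roots of unity, so `c_d(s r) = c_d(r)` for `s`
coprime to `d`. Together these give `c_{ab}(r s) = c_a(r) c_b(s)`, which splits each summand of
`Y[n₁n₂, k₁k₂]` along the factorization `d = d₁d₂` of the divisors of `n₁n₂`. -/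

section PrimitiveRoots

variable {R M : Type*} [CommRing R] [IsDomain R] [AddCommMonoid M]

theorem bijOn_pow_primitiveRoots {d s : ℕ} (h : s.Coprime d) :
    Set.BijOn (· ^ s) (primitiveRoots d R : Set R) (primitiveRoots d R) := by
  rcases eq_or_ne d 0 with rfl | hd
  · simp
  have : NeZero d := ⟨hd⟩
  let e := IsPrimitiveRoot.primitiveRootsPowEquivOfCoprime (R := R) h
  refine ⟨fun z hz ↦ (e ⟨z, hz⟩).2, fun z hz w hw hzw ↦ ?_, fun z hz ↦ ?_⟩
  · exact congrArg Subtype.val (e.injective (Subtype.ext hzw : e ⟨z, hz⟩ = e ⟨w, hw⟩))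
  · obtain ⟨w, hw⟩ := e.surjective ⟨z, hz⟩
    exact ⟨w, w.2, congrArg Subtype.val hw⟩

theorem sum_primitiveRoots_comp_pow {d s : ℕ} (h : s.Coprime d) (f : R → M) :
    ∑ z ∈ primitiveRoots d R, f (z ^ s) = ∑ z ∈ primitiveRoots d R, f z :=
  have ⟨hmaps, hinj, hsurj⟩ := bijOn_pow_primitiveRoots h
  Finset.sum_nbij (· ^ s) hmaps hinj hsurj fun _ _ ↦ rfl

theorem isPrimitiveRoot_mul_of_coprime {N : Type*} [CommMonoid N] {x y : N} {a b : ℕ}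
    (hx : IsPrimitiveRoot x a) (hy : IsPrimitiveRoot y b) (h : a.Coprime b) :
    IsPrimitiveRoot (x * y) (a * b) := by
  rw [hx.eq_orderOf, hy.eq_orderOf] at h ⊢
  rw [← (Commute.all x y).orderOf_mul_eq_mul_orderOf_of_coprime h]
  exact IsPrimitiveRoot.orderOf _

theorem injOn_mul_primitiveRoots {a b : ℕ} (h : a.Coprime b) :
    Set.InjOn (fun p : R × R ↦ p.1 * p.2) (primitiveRoots a R ×ˢ primitiveRoots b R) := by
  rintro ⟨x, y⟩ ⟨hx, hy⟩ ⟨x', y'⟩ ⟨hx', hy'⟩ hmul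
  have hpow (n : ℕ) : x ^ n * y ^ n = x' ^ n * y' ^ n := by
    simpa only [mul_pow] using congrArg (· ^ n) hmul
  have pow_eq_one {n : ℕ} {z : R} (hz : z ∈ primitiveRoots n R) : z ^ n = 1 :=
    (isPrimitiveRoot_of_mem_primitiveRoots hz).pow_eq_one
  have hxb : x ^ b = x' ^ b := by
    simpa only [pow_eq_one hy, pow_eq_one hy', mul_one] using hpow b
  have hya : y ^ a = y' ^ a := by
    simpa only [pow_eq_one hx, pow_eq_one hx', one_mul] using hpow a
  exact Prod.ext ((bijOn_pow_primitiveRoots h.symm).injOn hx hx' hxb)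
    ((bijOn_pow_primitiveRoots h).injOn hy hy' hya)

theorem surjOn_mul_primitiveRoots {a b : ℕ} (h : a.Coprime b) :
    Set.SurjOn (fun p : R × R ↦ p.1 * p.2) (primitiveRoots a R ×ˢ primitiveRoots b R)
      (primitiveRoots (a * b) R) := by
  intro z hz
  have hab : 0 < a * b := Nat.pos_of_ne_zero fun h0 ↦ by simp [h0] at hz
  have hadd : (a + b).Coprime (a * b) := by
    simpa [Nat.coprime_mul_iff_right, Nat.coprime_comm] using h
  -- Writing `z = w ^ (a + b)` exhibits the factorization `z = w ^ b * w ^ a`.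
  obtain ⟨w, hw, rfl⟩ := (bijOn_pow_primitiveRoots hadd).surjOn hz
  have hw : IsPrimitiveRoot w (a * b) := isPrimitiveRoot_of_mem_primitiveRoots hw
  refine ⟨(w ^ b, w ^ a), ⟨?_, ?_⟩, ?_⟩
  · exact (mem_primitiveRoots (Nat.pos_of_mul_pos_right hab)).2 (hw.pow hab (mul_comm a b))
  · exact (mem_primitiveRoots (Nat.pos_of_mul_pos_left hab)).2 (hw.pow hab rfl)
  · simp only [add_comm a b, pow_add]

theorem bijOn_mul_primitiveRoots {a b : ℕ} (h : a.Coprime b) :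
    Set.BijOn (fun p : R × R ↦ p.1 * p.2) (primitiveRoots a R ×ˢ primitiveRoots b R)
      (primitiveRoots (a * b) R) := by
  refine ⟨?_, injOn_mul_primitiveRoots h, surjOn_mul_primitiveRoots h⟩
  rintro ⟨x, y⟩ ⟨hx, hy⟩
  have hab : 0 < a * b := Nat.pos_of_ne_zero fun h0 ↦ by
    rcases Nat.mul_eq_zero.1 h0 with rfl | rfl <;> simp at hx hy
  exact (mem_primitiveRoots hab).2 (isPrimitiveRoot_mul_of_coprime
    (isPrimitiveRoot_of_mem_primitiveRoots hx) (isPrimitiveRoot_of_mem_primitiveRoots hy) h)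

theorem sum_primitiveRoots_mul {a b : ℕ} (h : a.Coprime b) (f : R → M) :
    ∑ z ∈ primitiveRoots (a * b) R, f z =
      ∑ x ∈ primitiveRoots a R, ∑ y ∈ primitiveRoots b R, f (x * y) := by
  rw [← Finset.sum_product']
  have ⟨hmaps, hinj, hsurj⟩ := bijOn_mul_primitiveRoots (R := R) h
  rw [← Finset.coe_product] at hmaps hinj hsurj
  exact (Finset.sum_nbij _ hmaps hinj hsurj fun _ _ ↦ rfl).symm

theorem sum_primitiveRoots_eq_sum_coprime_pow {d : ℕ} [NeZero d] {ζ : R}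
    (hζ : IsPrimitiveRoot ζ d) (f : R → M) :
    ∑ z ∈ primitiveRoots d R, f z = ∑ m ∈ Finset.range d with m.gcd d = 1, f (ζ ^ m) := by
  symm
  refine Finset.sum_nbij (ζ ^ ·) (fun m hm ↦ ?_) (hζ.injOn_pow.mono fun m hm ↦ ?_)
    (fun z hz ↦ ?_) fun _ _ ↦ rfl
  · exact (mem_primitiveRoots (NeZero.pos d)).2 (hζ.pow_of_coprime m (Finset.mem_filter.1 hm).2)
  · exact Finset.mem_coe.2 (Finset.mem_of_mem_filter m hm)
  · obtain ⟨m, hmd, hm, rfl⟩ :=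
      hζ.isPrimitiveRoot_iff.1 (isPrimitiveRoot_of_mem_primitiveRoots hz)
    exact ⟨m, Finset.mem_filter.2 ⟨Finset.mem_range.2 hmd, hm⟩, rfl⟩

end PrimitiveRoots

theorem sum_divisors_mul_of_coprime {M : Type*} [AddCommMonoid M] {m n : ℕ} (h : m.Coprime n)
    (f : ℕ → M) :
    ∑ d ∈ (m * n).divisors, f d = ∑ a ∈ m.divisors, ∑ b ∈ n.divisors, f (a * b) := by
  rw [Nat.divisors_mul, Finset.mul_def, Finset.sum_image h.mul_injOn_divisors, Finset.sum_product]

theorem ramanujanSum_eq_sum_primitiveRoots (d r : ℕ) :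
    ramanujanSum d r = ∑ z ∈ primitiveRoots d ℂ, z ^ r := by
  rcases eq_or_ne d 0 with rfl | hd
  · simp [ramanujanSum]
  have : NeZero d := ⟨hd⟩
  rw [sum_primitiveRoots_eq_sum_coprime_pow (Complex.isPrimitiveRoot_exp d hd)]
  refine Finset.sum_congr rfl fun m _ ↦ ?_
  rw [← pow_mul, ← Complex.exp_nat_mul, Nat.cast_mul]
  ring_nf

theorem ramanujanSum_mul_right {d s : ℕ} (h : s.Coprime d) (r : ℕ) :
    ramanujanSum d (s * r) = ramanujanSum d r := by
  simp only [ramanujanSum_eq_sum_primitiveRoots, pow_mul]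
  exact sum_primitiveRoots_comp_pow h (· ^ r)

theorem ramanujanSum_mul_left {a b : ℕ} (h : a.Coprime b) (r : ℕ) :
    ramanujanSum (a * b) r = ramanujanSum a r * ramanujanSum b r := by
  simp only [ramanujanSum_eq_sum_primitiveRoots, sum_primitiveRoots_mul h, mul_pow,
    Finset.sum_mul_sum]

theorem ramanujanSum_mul_mul {a b r s : ℕ} (hab : a.Coprime b) (hrb : r.Coprime b)
    (has : a.Coprime s) :
    ramanujanSum (a * b) (r * s) = ramanujanSum a r * ramanujanSum b s := by
  rw [ramanujanSum_mul_left hab, ramanujanSum_mul_right hrb, mul_comm r s,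
    ramanujanSum_mul_right has.symm]

theorem stmt_13_general {n₁ n₂ k₁ k₂ : ℕ} (h : (n₁ * k₁).Coprime (n₂ * k₂)) :
    Y (n₁ * n₂) (k₁ * k₂) = Y n₁ k₁ * Y n₂ k₂ := by
  obtain ⟨⟨hn, hkn⟩, hnk, hk⟩ :
      (n₁.Coprime n₂ ∧ k₁.Coprime n₂) ∧ n₁.Coprime k₂ ∧ k₁.Coprime k₂ := by
    simpa only [Nat.coprime_mul_iff_left, Nat.coprime_mul_iff_right] using h
  simp only [Y]
  rw [sum_divisors_mul_of_coprime hn, Finset.sum_mul_sum]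
  refine Finset.sum_congr rfl fun a ha ↦ Finset.sum_congr rfl fun b hb ↦ ?_
  have ha : a ∣ n₁ := Nat.dvd_of_mem_divisors ha
  have hb : b ∣ n₂ := Nat.dvd_of_mem_divisors hb
  have ha' : n₁ / a ∣ n₁ := Nat.div_dvd_of_dvd ha
  have hb' : n₂ / b ∣ n₂ := Nat.div_dvd_of_dvd hb
  rw [← Nat.div_mul_div_comm ha hb,
    ramanujanSum_mul_mul hk (hnk.coprime_dvd_left ha') (hkn.coprime_dvd_right hb'),
    ramanujanSum_mul_mul (hn.of_dvd ha hb) (hn.of_dvd ha' hb) (hn.of_dvd ha hb')]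
  exact mul_mul_mul_comm _ _ _ _

theorem stmt_13 (n₁ n₂ : ℕ) (h₁ : 0 < n₁) (h₂ : 0 < n₂) (hcop : Nat.Coprime n₁ n₂)
    (k₁ k₂ : ℕ) (hk₁ : k₁ ∣ n₁) (hk₂ : k₂ ∣ n₂) :
    Y (n₁ * n₂) (k₁ * k₂) = Y n₁ k₁ * Y n₂ k₂ := by
  have hsq : (n₁ * n₁).Coprime (n₂ * n₂) := (hcop.mul_left hcop).mul_right (hcop.mul_left hcop)
  exact stmt_13_general (hsq.of_dvd (mul_dvd_mul_left n₁ hk₁) (mul_dvd_mul_left n₂ hk₂))
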